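/- arXiv:2209.03843 — 2 statements merged into one kernel-verified Lean document; each statement's English description precedes it below -/
import Mathlib

section
/- A homogeneous cubic form f in the variables x, y, z, t over 𝔽₂ vanishes at every point of 𝔽₂⁴ if and only if f is an 𝔽₂-linear combination of the six cubic forms xy(x+y), xz(x+z), xt(x+t), yz(y+z), yt(y+t), zt(z+t). In particular there are exactly 63 nonzero cubic forms over 𝔽₂ vanishing at every point of 𝔽₂⁴. -/
open MvPolynomial

noncomputable section

/-- The field with two elements. -/
abbrev F2 : Type := ZMod 2

/-- An algebraic closure of `F2`. -/
abbrev Kbar : Type := AlgebraicClosure F2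

/-- Linear substitution action of a matrix `g` on a polynomial `f`:
`(act g f)(x) = f (g * x)`, i.e. the variable `X i` is replaced by `∑ j, g i j • X j`. -/
def act (g : Matrix (Fin 4) (Fin 4) F2) (f : MvPolynomial (Fin 4) F2) :
    MvPolynomial (Fin 4) F2 :=
  aeval (fun i => ∑ j, g i j • X j) f

lemma act_one (f : MvPolynomial (Fin 4) F2) : act 1 f = f := by
  have h : (fun i => ∑ j, (1 : Matrix (Fin 4) (Fin 4) F2) i j • (X j : MvPolynomial (Fin 4) F2))
      = X := by
    funext i
    simp [Matrix.one_apply, ite_smul]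
  simp [act, h]

lemma act_act (g h : Matrix (Fin 4) (Fin 4) F2) (f : MvPolynomial (Fin 4) F2) :
    act g (act h f) = act (h * g) f := by
  show (aeval _) ((aeval _) f) = _
  rw [← AlgHom.comp_apply, comp_aeval]
  have key : (fun i => (aeval fun i => ∑ j, g i j • (X j : MvPolynomial (Fin 4) F2))
        (∑ j, h i j • (X j : MvPolynomial (Fin 4) F2)))
      = fun i => ∑ j, (h * g) i j • (X j : MvPolynomial (Fin 4) F2) := by
    funext i
    simp only [map_sum, map_smul, aeval_X, Matrix.mul_apply, Finset.smul_sum, smul_smul,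
      Finset.sum_smul]
    rw [Finset.sum_comm]
  rw [key]
  rfl

/-- The stabilizer of a polynomial `f` under the linear-substitution action of `GL₄(𝔽₂)`. -/
def stab (f : MvPolynomial (Fin 4) F2) : Subgroup (GL (Fin 4) F2) where
  carrier := {g | act (g : Matrix (Fin 4) (Fin 4) F2) f = f}
  one_mem' := by simpa using act_one f
  mul_mem' := by
    intro a b ha hb
    simp only [Set.mem_setOf_eq] at *
    have : act ((↑(a * b) : Matrix (Fin 4) (Fin 4) F2)) f = act ↑b (act ↑a f) := by
      rw [act_act]; rfl
    rw [this, ha, hb]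
  inv_mem' := by
    intro a ha
    simp only [Set.mem_setOf_eq] at *
    have h2 := congrArg (act ((↑(a⁻¹) : Matrix (Fin 4) (Fin 4) F2))) ha
    rw [act_act] at h2
    rw [Units.mul_inv, act_one] at h2
    exact h2.symm

/-- A smooth cubic form over `𝔽₂`: homogeneous of degree `3`, such that over an algebraic
closure the only common zero of `f` and its four partial derivatives is the origin. -/
def IsSmoothCubic (f : MvPolynomial (Fin 4) F2) : Prop :=
  f.IsHomogeneous 3 ∧
    ∀ v : Fin 4 → Kbar,
      eval v (map (algebraMap F2 Kbar) f) = 0 →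
      (∀ i : Fin 4, eval v (map (algebraMap F2 Kbar) (pderiv i f)) = 0) →
      v = 0

/-- The cubic form `x²t + y²z + yz² + xt²`. -/
def c0 : MvPolynomial (Fin 4) F2 :=
  X 0 ^ 2 * X 3 + X 1 ^ 2 * X 2 + X 1 * X 2 ^ 2 + X 0 * X 3 ^ 2

/-- The general cubic form with coefficient vector `c`. -/
def cub (c : Fin 20 → F2) : MvPolynomial (Fin 4) F2 :=
      C (c 0) * X 0 ^ 3 + C (c 1) * X 1 ^ 3 + C (c 2) * X 2 ^ 3 + C (c 3) * X 3 ^ 3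
      + C (c 4) * (X 0 ^ 2 * X 1) + C (c 5) * (X 0 * X 1 ^ 2)
      + C (c 6) * (X 0 ^ 2 * X 2) + C (c 7) * (X 0 * X 2 ^ 2)
      + C (c 8) * (X 0 ^ 2 * X 3) + C (c 9) * (X 0 * X 3 ^ 2)
      + C (c 10) * (X 1 ^ 2 * X 2) + C (c 11) * (X 1 * X 2 ^ 2)
      + C (c 12) * (X 1 ^ 2 * X 3) + C (c 13) * (X 1 * X 3 ^ 2)
      + C (c 14) * (X 2 ^ 2 * X 3) + C (c 15) * (X 2 * X 3 ^ 2)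
      + C (c 16) * (X 0 * X 1 * X 2) + C (c 17) * (X 0 * X 1 * X 3)
      + C (c 18) * (X 0 * X 2 * X 3) + C (c 19) * (X 1 * X 2 * X 3)

set_option maxHeartbeats 1000000 in
lemma cubic_expand (f : MvPolynomial (Fin 4) F2) (hf : f.IsHomogeneous 3) :
    ∃ c : Fin 20 → F2, f = cub c := by
  rw [f.as_sum]
  refine Finset.sum_induction _ (fun g : MvPolynomial (Fin 4) F2 => ∃ c : Fin 20 → F2, g = cub c) ?_ ?_ ?_
  · rintro _ _ ⟨c, rfl⟩ ⟨d, rfl⟩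
    refine ⟨c + d, ?_⟩
    simp only [cub, Pi.add_apply, C_add]
    ring
  · exact ⟨0, by simp [cub]⟩
  · intro d hd
    have h3 : d 0 + d 1 + d 2 + d 3 = 3 := by
      have := hf (mem_support_iff.mp hd)
      simpa [Finsupp.weight_apply, Finsupp.sum_fintype, Fin.sum_univ_four] using this
    generalize coeff d f = a
    have hm : monomial d a = C a * (X 0 ^ d 0 * X 1 ^ d 1 * X 2 ^ d 2 * X 3 ^ d 3) := by
      rw [monomial_eq, Finsupp.prod_fintype _ _ (by simp), Fin.prod_univ_four]
    rw [hm]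
    generalize d 0 = p at *
    generalize d 1 = q at *
    generalize d 2 = r at *
    generalize d 3 = s at *
    have hp : p ≤ 3 := by omega
    have hq : q ≤ 3 := by omega
    have hr : r ≤ 3 := by omega
    obtain rfl : s = 3 - p - q - r := by omega
    clear hm hd
    interval_cases p <;> interval_cases q <;> interval_cases r <;> try (exfalso; omega)
    · exact ⟨Pi.single 3 a, by simp [cub]⟩
    · exact ⟨Pi.single 15 a, by simp [cub]⟩
    · exact ⟨Pi.single 14 a, by simp [cub]⟩
    · exact ⟨Pi.single 2 a, by simp [cub]⟩
    · exact ⟨Pi.single 13 a, by simp [cub]⟩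
    · exact ⟨Pi.single 19 a, by simp [cub]⟩
    · exact ⟨Pi.single 11 a, by simp [cub]⟩
    · exact ⟨Pi.single 12 a, by simp [cub]⟩
    · exact ⟨Pi.single 10 a, by simp [cub]⟩
    · exact ⟨Pi.single 1 a, by simp [cub]⟩
    · exact ⟨Pi.single 9 a, by simp [cub]⟩
    · exact ⟨Pi.single 18 a, by simp [cub]⟩
    · exact ⟨Pi.single 7 a, by simp [cub]⟩
    · exact ⟨Pi.single 17 a, by simp [cub]⟩
    · exact ⟨Pi.single 16 a, by simp [cub]⟩
    · exact ⟨Pi.single 5 a, by simp [cub]⟩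
    · exact ⟨Pi.single 8 a, by simp [cub]⟩
    · exact ⟨Pi.single 6 a, by simp [cub]⟩
    · exact ⟨Pi.single 4 a, by simp [cub]⟩
    · exact ⟨Pi.single 0 a, by simp [cub]⟩

def comb (a : Fin 6 → F2) : MvPolynomial (Fin 4) F2 :=
  a 0 • (X 0 * X 1 * (X 0 + X 1)) + a 1 • (X 0 * X 2 * (X 0 + X 2))
    + a 2 • (X 0 * X 3 * (X 0 + X 3)) + a 3 • (X 1 * X 2 * (X 1 + X 2))
    + a 4 • (X 1 * X 3 * (X 1 + X 3)) + a 5 • (X 2 * X 3 * (X 2 + X 3))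

lemma comb_hom (a : Fin 6 → F2) : (comb a).IsHomogeneous 3 := by
  have h : ∀ (b : F2) (i j : Fin 4),
      (b • (X i * X j * (X i + X j)) : MvPolynomial (Fin 4) F2).IsHomogeneous 3 := by
    intro b i j
    rw [smul_eq_C_mul]
    have := (isHomogeneous_C (Fin 4) b).mul
      (((isHomogeneous_X F2 i).mul (isHomogeneous_X F2 j)).mul
        ((isHomogeneous_X F2 i).add (isHomogeneous_X F2 j)))
    simpa using this
  exact (((((h _ _ _).add (h _ _ _)).add (h _ _ _)).add (h _ _ _)).add (h _ _ _)).add (h _ _ _)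

lemma comb_eval (a : Fin 6 → F2) (v : Fin 4 → F2) : eval v (comb a) = 0 := by
  have h : ∀ x y : F2, x * y * (x + y) = 0 := by decide
  simp [comb, smul_eval, h]

lemma comb_inj : Function.Injective comb := by
  intro a b hab
  have key : ∀ (i j : Fin 4), eval (Pi.single j 1) (pderiv i (comb a)) =
      eval (Pi.single j 1) (pderiv i (comb b)) := by intro i j; rw [hab]
  have h1 := key 0 1
  have h2 := key 0 2
  have h3 := key 0 3
  have h4 := key 1 2
  have h5 := key 1 3
  have h6 := key 2 3
  simp [comb, smul_eval, pderiv_X, Pi.single_apply, Derivation.leibniz] at h1 h2 h3 h4 h5 h6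
  funext i
  fin_cases i <;> assumption

lemma vanish_comb (f : MvPolynomial (Fin 4) F2) (hf : f.IsHomogeneous 3)
    (h : ∀ v : Fin 4 → F2, eval v f = 0) : ∃ a, f = comb a := by
  obtain ⟨c, rfl⟩ := cubic_expand f hf
  have two : ∀ x y : F2, x + y = 0 → y = x := by decide
  have e0 := h ![1,0,0,0]
  have e1 := h ![0,1,0,0]
  have e2 := h ![0,0,1,0]
  have e3 := h ![0,0,0,1]
  have e01 := h ![1,1,0,0]
  have e02 := h ![1,0,1,0]
  have e03 := h ![1,0,0,1]
  have e12 := h ![0,1,1,0]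
  have e13 := h ![0,1,0,1]
  have e23 := h ![0,0,1,1]
  have e012 := h ![1,1,1,0]
  have e013 := h ![1,1,0,1]
  have e023 := h ![1,0,1,1]
  have e123 := h ![0,1,1,1]
  clear h hf
  simp only [cub] at *
  simp at e0 e1 e2 e3
  simp [e0, e1, e2, e3] at e01 e02 e03 e12 e13 e23
  replace e01 := two _ _ e01
  replace e02 := two _ _ e02
  replace e03 := two _ _ e03
  replace e12 := two _ _ e12
  replace e13 := two _ _ e13
  replace e23 := two _ _ e23
  have t3 : ∀ x y z w : F2, x + x + y + y + z + z + w = 0 → w = 0 := by decide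
  simp [e0, e1, e2, e3, e01, e02, e03, e12, e13, e23] at e012 e013 e023 e123
  replace e012 := t3 _ _ _ _ e012
  replace e013 := t3 _ _ _ _ e013
  replace e023 := t3 _ _ _ _ e023
  replace e123 := t3 _ _ _ _ e123
  refine ⟨![c 4, c 6, c 8, c 10, c 12, c 14], ?_⟩
  simp [comb, smul_eq_C_mul, e0, e1, e2, e3, e01, e02, e03, e12, e13, e23, e012, e013, e023, e123]
  ring

/-- a homogeneous cubic form over `𝔽₂` vanishes at every point of `𝔽₂⁴` if and
only if it is an `𝔽₂`-linear combination of the six forms `xᵢxⱼ(xᵢ+xⱼ)`, `i < j`; in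
particular there are exactly `63` nonzero cubic forms vanishing everywhere on `𝔽₂⁴`. -/
theorem vanishing_cubic_forms :
    (∀ f : MvPolynomial (Fin 4) F2, f.IsHomogeneous 3 →
      ((∀ v : Fin 4 → F2, eval v f = 0) ↔
        ∃ a₁ a₂ a₃ a₄ a₅ a₆ : F2,
          f = a₁ • (X 0 * X 1 * (X 0 + X 1)) + a₂ • (X 0 * X 2 * (X 0 + X 2))
            + a₃ • (X 0 * X 3 * (X 0 + X 3)) + a₄ • (X 1 * X 2 * (X 1 + X 2))
            + a₅ • (X 1 * X 3 * (X 1 + X 3)) + a₆ • (X 2 * X 3 * (X 2 + X 3)))) ∧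
    {f : MvPolynomial (Fin 4) F2 |
      f.IsHomogeneous 3 ∧ f ≠ 0 ∧ ∀ v : Fin 4 → F2, eval v f = 0}.ncard = 63 := by
  constructor
  · intro f hf
    constructor
    · intro h
      obtain ⟨a, rfl⟩ := vanish_comb f hf h
      exact ⟨a 0, a 1, a 2, a 3, a 4, a 5, rfl⟩
    · rintro ⟨a₁, a₂, a₃, a₄, a₅, a₆, rfl⟩ v
      exact comb_eval ![a₁, a₂, a₃, a₄, a₅, a₆] v
  · have h0 : comb 0 = 0 := by simp [comb]
    have hs : {f : MvPolynomial (Fin 4) F2 |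
        f.IsHomogeneous 3 ∧ f ≠ 0 ∧ ∀ v : Fin 4 → F2, eval v f = 0} =
        Set.image comb ({0}ᶜ : Set (Fin 6 → F2)) := by
      ext f
      constructor
      · rintro ⟨hf, hne, h⟩
        obtain ⟨a, rfl⟩ := vanish_comb f hf h
        refine ⟨a, ?_, rfl⟩
        rintro rfl
        exact hne h0
      · rintro ⟨a, ha, rfl⟩
        exact ⟨comb_hom a, fun h => ha (comb_inj (h.trans h0.symm)), comb_eval a⟩
    rw [hs, Set.ncard_image_of_injective _ comb_inj, Set.ncard_compl]
    simp [Nat.card_eq_fintype_card]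
end
end

section
/- There are exactly 28 smooth cubic forms f over 𝔽₂ in four variables that vanish at every point of 𝔽₂⁴ (where smooth means that over an algebraic closure K of 𝔽₂, the only common zero in K⁴ of f and its four partial derivatives is the origin); equivalently, the orbit of c₀ = x²t + y²z + yz² + xt² under the linear-substitution action of GL₄(𝔽₂) consists of exactly 28 cubic forms. -/
open MvPolynomial

noncomputable section

/-- The cubic form attached to a matrix: `∑ A i j x_i x_j²`. -/
def frm (A : Matrix (Fin 4) (Fin 4) F2) : MvPolynomial (Fin 4) F2 :=
  ∑ i, ∑ j, C (A i j) * (X i * X j ^ 2)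

/-- The alternating matrix with given upper triangular entries. -/
def alt (p : F2 × F2 × F2 × F2 × F2 × F2) : Matrix (Fin 4) (Fin 4) F2 :=
  !![0, p.1, p.2.1, p.2.2.1;
     p.1, 0, p.2.2.2.1, p.2.2.2.2.1;
     p.2.1, p.2.2.2.1, 0, p.2.2.2.2.2;
     p.2.2.1, p.2.2.2.2.1, p.2.2.2.2.2, 0]

/-- The Pfaffian. -/
def pf (p : F2 × F2 × F2 × F2 × F2 × F2) : F2 :=
  p.1 * p.2.2.2.2.2 + p.2.1 * p.2.2.2.2.1 + p.2.2.1 * p.2.2.2.1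

/-- The Pfaffian dual. -/
def dual (p : F2 × F2 × F2 × F2 × F2 × F2) : F2 × F2 × F2 × F2 × F2 × F2 :=
  (p.2.2.2.2.2, p.2.2.2.2.1, p.2.2.2.1, p.2.2.1, p.2.1, p.1)

lemma two_eq_zero_poly : (2 : MvPolynomial (Fin 4) F2) = 0 := CharTwo.two_eq_zero

lemma pderiv_frm (A : Matrix (Fin 4) (Fin 4) F2) (i : Fin 4) :
    pderiv i (frm A) = ∑ j, C (A i j) * X j ^ 2 := by
  simp only [frm, map_sum, Derivation.leibniz, Derivation.leibniz_pow, pderiv_C, pderiv_X]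
  rw [Finset.sum_eq_single i]
  · apply Finset.sum_congr rfl
    intro j _
    simp [two_eq_zero_poly]
  · intro k _ hk
    apply Finset.sum_eq_zero
    intro j _
    simp [two_eq_zero_poly, Pi.single_apply, hk.symm]
  · simp

lemma frm_injective : Function.Injective frm := by
  intro A B h
  ext i j
  have h1 := congrArg (fun f => eval (Pi.single j 1) (pderiv i f)) h
  simpa [pderiv_frm, Pi.single_apply] using h1

lemma alt_injective : Function.Injective alt := by
  rintro ⟨a, b, c, d, e, f⟩ ⟨a₁, b₁, c₁, d₁, e₁, f₁⟩ h
  have h1 := congrFun₂ h 0 1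
  have h2 := congrFun₂ h 0 2
  have h3 := congrFun₂ h 0 3
  have h4 := congrFun₂ h 1 2
  have h5 := congrFun₂ h 1 3
  have h6 := congrFun₂ h 2 3
  simp [alt] at h1 h2 h3 h4 h5 h6
  simp [h1, h2, h3, h4, h5, h6]

lemma card_pf : {p | pf p ≠ 0}.ncard = 28 := by
  have : {p | pf p ≠ 0} = ((Finset.univ.filter (fun p => pf p ≠ 0) : Finset _) : Set _) := by
    ext; simp
  rw [this, Set.ncard_coe_finset]
  decide +kernel

lemma card_image : ((fun p => frm (alt p)) '' {p | pf p ≠ 0}).ncard = 28 := by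
  exact (Set.ncard_image_of_injective _ (frm_injective.comp alt_injective)).trans card_pf

lemma act_frm (g A : Matrix (Fin 4) (Fin 4) F2) : act g (frm A) = frm (g.transpose * A * g) := by
  have hsq : ∀ j, (∑ l, g j l • (X l : MvPolynomial (Fin 4) F2)) ^ 2
      = ∑ l, g j l • X l ^ 2 := by
    intro j
    rw [CharTwo.sum_sq]
    apply Finset.sum_congr rfl
    intro l _
    rw [smul_pow]
    congr 1
    generalize g j l = y
    revert y; decide
  simp only [act, frm, map_sum, map_mul, map_pow, aeval_X, aeval_C, hsq]
  simp only [Matrix.mul_apply,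
    Matrix.transpose_apply, smul_eq_C_mul, algebraMap_eq, Finset.sum_mul, Finset.mul_sum]
  have e1 : ∀ F : Fin 4 → Fin 4 → Fin 4 → Fin 4 → MvPolynomial (Fin 4) F2,
      ∑ i, ∑ j, ∑ k, ∑ l, F i j k l = ∑ k, ∑ l, ∑ j, ∑ i, F i j l k := by
    intro F
    calc _ = ∑ i, ∑ k, ∑ j, ∑ l, F i j k l :=
          Finset.sum_congr rfl fun i _ => Finset.sum_comm
      _ = ∑ k, ∑ i, ∑ j, ∑ l, F i j k l := Finset.sum_comm
      _ = ∑ k, ∑ i, ∑ l, ∑ j, F i j k l :=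
          Finset.sum_congr rfl fun i _ => Finset.sum_congr rfl fun i _ => Finset.sum_comm
      _ = ∑ k, ∑ l, ∑ i, ∑ j, F i j k l :=
          Finset.sum_congr rfl fun i _ => Finset.sum_comm
      _ = ∑ l, ∑ k, ∑ i, ∑ j, F i j k l := Finset.sum_comm
      _ = _ := Finset.sum_congr rfl fun i _ => Finset.sum_congr rfl fun i _ => Finset.sum_comm
  rw [e1]
  simp only [map_sum, map_mul, Finset.sum_mul]
  apply Finset.sum_congr rfl
  intro k _
  apply Finset.sum_congr rfl
  intro l _
  apply Finset.sum_congr rfl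
  intro j _
  apply Finset.sum_congr rfl
  intro i _
  ring

lemma c0_eq : c0 = frm (alt (0, 0, 1, 1, 0, 0)) := by
  simp [c0, frm, alt, Fin.sum_univ_four]
  ring

lemma alt_mul_dual : ∀ p, pf p ≠ 0 → alt (dual p) * alt p = 1 := by
  decide +kernel

lemma exists_ker : ∀ p, pf p = 0 → ∃ w : Fin 4 → F2, w ≠ 0 ∧ (alt p).mulVec w = 0 := by
  decide +kernel

/-- Gram-matrix realization when the `03` entry is `1`. -/
def gram3 (p : F2 × F2 × F2 × F2 × F2 × F2) : Matrix (Fin 4) (Fin 4) F2 :=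
  !![1, p.2.2.2.2.1, p.2.2.2.2.2, 0;
     0, 1, 0, 0;
     0, 0, pf p, 0;
     0, p.1, p.2.1, 1]

/-- Gram-matrix realization in general. -/
def gram (p : F2 × F2 × F2 × F2 × F2 × F2) : Matrix (Fin 4) (Fin 4) F2 :=
  if p.2.2.1 = 1 then gram3 p
  else if p.2.1 = 1 then
    (gram3 (p.1, p.2.2.1, p.2.1, p.2.2.2.2.1, p.2.2.2.1, p.2.2.2.2.2)).submatrix id ![0, 1, 3, 2]
  else
    (gram3 (p.2.2.1, p.2.1, p.1, p.2.2.2.2.2, p.2.2.2.2.1, p.2.2.2.1)).submatrix id ![0, 3, 2, 1]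

lemma gram_spec : ∀ p, pf p ≠ 0 →
    (gram p).transpose * alt (0, 0, 1, 1, 0, 0) * gram p = alt p := by
  decide +kernel

lemma congr_alt (g : Matrix (Fin 4) (Fin 4) F2) :
    ∃ p, g.transpose * alt (0, 0, 1, 1, 0, 0) * g = alt p := by
  have hent : ∀ i j, (g.transpose * alt (0, 0, 1, 1, 0, 0) * g) i j
      = g 0 i * g 3 j + g 1 i * g 2 j + g 2 i * g 1 j + g 3 i * g 0 j := by
    intro i j
    simp [alt, Matrix.mul_apply, Fin.sum_univ_four]
    ring
  generalize g.transpose * alt (0, 0, 1, 1, 0, 0) * g = B at hent ⊢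
  have h2 : (2 : F2) = 0 := rfl
  have hdiag : ∀ i, B i i = 0 := by
    intro i
    rw [hent]
    linear_combination (g 0 i * g 3 i + g 1 i * g 2 i) * h2
  have hsymm : ∀ i j, B i j = B j i := by
    intro i j
    rw [hent, hent]
    ring
  refine ⟨(B 0 1, B 0 2, B 0 3, B 1 2, B 1 3, B 2 3), ?_⟩
  ext i j
  fin_cases i <;> fin_cases j <;> first | exact hdiag _ | rfl | exact hsymm _ _

lemma orbit_eq : {f : MvPolynomial (Fin 4) F2 |
      ∃ g : GL (Fin 4) F2, act (g : Matrix (Fin 4) (Fin 4) F2) c0 = f}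
    = (fun p => frm (alt p)) '' {p | pf p ≠ 0} := by
  ext f
  simp only [Set.mem_setOf_eq, Set.mem_image, c0_eq, act_frm]
  constructor
  · rintro ⟨g, rfl⟩
    obtain ⟨p, hp⟩ := congr_alt (g : Matrix (Fin 4) (Fin 4) F2)
    refine ⟨p, ?_, by rw [hp]⟩
    intro h0
    obtain ⟨w, hw, hw0⟩ := exists_ker p h0
    apply hw
    have hu : IsUnit (alt p) := by
      rw [← hp]
      have hJ : IsUnit (alt (0, 0, 1, 1, 0, 0)) :=
        IsUnit.of_mul_eq_one_right _ (alt_mul_dual (0, 0, 1, 1, 0, 0) (by decide))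
      exact (((Matrix.isUnit_transpose _).2 g.isUnit).mul hJ).mul g.isUnit
    exact Matrix.mulVec_injective_of_isUnit hu (by rw [hw0, Matrix.mulVec_zero])
  · rintro ⟨p, hp, rfl⟩
    have h := gram_spec p hp
    have hu : IsUnit (gram p) := by
      refine IsUnit.of_mul_eq_one_right
        (alt (dual p) * ((gram p).transpose * alt (0, 0, 1, 1, 0, 0))) ?_
      rw [Matrix.mul_assoc, h, alt_mul_dual p hp]
    obtain ⟨g, hg⟩ := hu
    exact ⟨g, by rw [hg, h]⟩

/-- The twenty cubic monomials. -/
def mons : Fin 20 → MvPolynomial (Fin 4) F2 :=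
  ![X 0 ^ 0 * X 1 ^ 0 * X 2 ^ 0 * X 3 ^ 3,
    X 0 ^ 0 * X 1 ^ 0 * X 2 ^ 1 * X 3 ^ 2,
    X 0 ^ 0 * X 1 ^ 0 * X 2 ^ 2 * X 3 ^ 1,
    X 0 ^ 0 * X 1 ^ 0 * X 2 ^ 3 * X 3 ^ 0,
    X 0 ^ 0 * X 1 ^ 1 * X 2 ^ 0 * X 3 ^ 2,
    X 0 ^ 0 * X 1 ^ 1 * X 2 ^ 1 * X 3 ^ 1,
    X 0 ^ 0 * X 1 ^ 1 * X 2 ^ 2 * X 3 ^ 0,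
    X 0 ^ 0 * X 1 ^ 2 * X 2 ^ 0 * X 3 ^ 1,
    X 0 ^ 0 * X 1 ^ 2 * X 2 ^ 1 * X 3 ^ 0,
    X 0 ^ 0 * X 1 ^ 3 * X 2 ^ 0 * X 3 ^ 0,
    X 0 ^ 1 * X 1 ^ 0 * X 2 ^ 0 * X 3 ^ 2,
    X 0 ^ 1 * X 1 ^ 0 * X 2 ^ 1 * X 3 ^ 1,
    X 0 ^ 1 * X 1 ^ 0 * X 2 ^ 2 * X 3 ^ 0,
    X 0 ^ 1 * X 1 ^ 1 * X 2 ^ 0 * X 3 ^ 1,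
    X 0 ^ 1 * X 1 ^ 1 * X 2 ^ 1 * X 3 ^ 0,
    X 0 ^ 1 * X 1 ^ 2 * X 2 ^ 0 * X 3 ^ 0,
    X 0 ^ 2 * X 1 ^ 0 * X 2 ^ 0 * X 3 ^ 1,
    X 0 ^ 2 * X 1 ^ 0 * X 2 ^ 1 * X 3 ^ 0,
    X 0 ^ 2 * X 1 ^ 1 * X 2 ^ 0 * X 3 ^ 0,
    X 0 ^ 3 * X 1 ^ 0 * X 2 ^ 0 * X 3 ^ 0]

lemma mem_span_mons (f : MvPolynomial (Fin 4) F2) (hf : f.IsHomogeneous 3) :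
    f ∈ Submodule.span F2 (Set.range mons) := by
  rw [f.as_sum]
  apply Submodule.sum_mem
  intro d hd
  have h := hf (mem_support_iff.1 hd)
  rw [Finsupp.weight_apply, Finsupp.sum_fintype _ _ (by simp)] at h
  simp [Fin.sum_univ_four] at h
  have hm : monomial d (coeff d f)
      = coeff d f • (X 0 ^ d 0 * X 1 ^ d 1 * X 2 ^ d 2 * X 3 ^ d 3 : MvPolynomial (Fin 4) F2) := by
    rw [monomial_eq, Finsupp.prod_fintype _ _ (by simp), Fin.prod_univ_four, smul_eq_C_mul]
  rw [hm]
  apply Submodule.smul_mem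
  apply Submodule.subset_span
  generalize d 0 = q0 at h ⊢
  generalize d 1 = q1 at h ⊢
  generalize d 2 = q2 at h ⊢
  generalize d 3 = q3 at h ⊢
  have b0 : q0 ≤ 3 := by omega
  have b1 : q1 ≤ 3 - q0 := by omega
  have b2 : q2 ≤ 3 - q0 - q1 := by omega
  obtain rfl : q3 = 3 - q0 - q1 - q2 := by omega
  clear h hm hd
  interval_cases q0 <;> interval_cases q1 <;> interval_cases q2
  · exact ⟨0, rfl⟩
  · exact ⟨1, rfl⟩
  · exact ⟨2, rfl⟩
  · exact ⟨3, rfl⟩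
  · exact ⟨4, rfl⟩
  · exact ⟨5, rfl⟩
  · exact ⟨6, rfl⟩
  · exact ⟨7, rfl⟩
  · exact ⟨8, rfl⟩
  · exact ⟨9, rfl⟩
  · exact ⟨10, rfl⟩
  · exact ⟨11, rfl⟩
  · exact ⟨12, rfl⟩
  · exact ⟨13, rfl⟩
  · exact ⟨14, rfl⟩
  · exact ⟨15, rfl⟩
  · exact ⟨16, rfl⟩
  · exact ⟨17, rfl⟩
  · exact ⟨18, rfl⟩
  · exact ⟨19, rfl⟩

lemma vanishing_eq (f : MvPolynomial (Fin 4) F2) (hf : f.IsHomogeneous 3)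
    (hv : ∀ v : Fin 4 → F2, eval v f = 0) : ∃ p, f = frm (alt p) := by
  obtain ⟨a, rfl⟩ := (Submodule.mem_span_range_iff_exists_fun F2).1 (mem_span_mons f hf)
  have h2 : (2 : F2) = 0 := rfl
  have k0 := hv ![1, 0, 0, 0]
  simp [Fin.sum_univ_succ, mons, smul_eq_C_mul] at k0
  have k1 := hv ![0, 1, 0, 0]
  simp [Fin.sum_univ_succ, mons, smul_eq_C_mul] at k1
  have k2 := hv ![0, 0, 1, 0]
  simp [Fin.sum_univ_succ, mons, smul_eq_C_mul] at k2
  have k3 := hv ![0, 0, 0, 1]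
  simp [Fin.sum_univ_succ, mons, smul_eq_C_mul] at k3
  have k01 := hv ![1, 1, 0, 0]
  simp [Fin.sum_univ_succ, mons, smul_eq_C_mul] at k01
  have k02 := hv ![1, 0, 1, 0]
  simp [Fin.sum_univ_succ, mons, smul_eq_C_mul] at k02
  have k03 := hv ![1, 0, 0, 1]
  simp [Fin.sum_univ_succ, mons, smul_eq_C_mul] at k03
  have k12 := hv ![0, 1, 1, 0]
  simp [Fin.sum_univ_succ, mons, smul_eq_C_mul] at k12
  have k13 := hv ![0, 1, 0, 1]
  simp [Fin.sum_univ_succ, mons, smul_eq_C_mul] at k13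
  have k23 := hv ![0, 0, 1, 1]
  simp [Fin.sum_univ_succ, mons, smul_eq_C_mul] at k23
  have k012 := hv ![1, 1, 1, 0]
  simp [Fin.sum_univ_succ, mons, smul_eq_C_mul] at k012
  have k013 := hv ![1, 1, 0, 1]
  simp [Fin.sum_univ_succ, mons, smul_eq_C_mul] at k013
  have k023 := hv ![1, 0, 1, 1]
  simp [Fin.sum_univ_succ, mons, smul_eq_C_mul] at k023
  have k123 := hv ![0, 1, 1, 1]
  simp [Fin.sum_univ_succ, mons, smul_eq_C_mul] at k123
  replace k012 : a 14 = 0 := by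
    linear_combination k012 - k01 - k02 - k12 + k0 + k1 + k2
  replace k013 : a 13 = 0 := by
    linear_combination k013 - k01 - k03 - k13 + k0 + k1 + k3
  replace k023 : a 11 = 0 := by
    linear_combination k023 - k02 - k03 - k23 + k0 + k2 + k3
  replace k123 : a 5 = 0 := by
    linear_combination k123 - k12 - k13 - k23 + k1 + k2 + k3
  replace k01 : a 18 = a 15 := by linear_combination k01 - k0 - k1 - a 15 * h2
  replace k02 : a 17 = a 12 := by linear_combination k02 - k0 - k2 - a 12 * h2
  replace k03 : a 16 = a 10 := by linear_combination k03 - k0 - k3 - a 10 * h2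
  replace k12 : a 8 = a 6 := by linear_combination k12 - k1 - k2 - a 6 * h2
  replace k13 : a 7 = a 4 := by linear_combination k13 - k1 - k3 - a 4 * h2
  replace k23 : a 2 = a 1 := by linear_combination k23 - k2 - k3 - a 1 * h2
  replace k0 : a 19 = 0 := by linear_combination k0
  replace k1 : a 9 = 0 := by linear_combination k1
  replace k2 : a 3 = 0 := by linear_combination k2
  replace k3 : a 0 = 0 := by linear_combination k3
  refine ⟨(a 15, a 12, a 10, a 6, a 4, a 1), ?_⟩
  simp only [Fin.sum_univ_succ, mons, smul_eq_C_mul]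
  simp [k012, k013, k023, k123, k01, k02, k03, k12, k13, k23, k0, k1, k2, k3, frm, alt, Fin.sum_univ_four]
  ring

lemma frm_homogeneous (A : Matrix (Fin 4) (Fin 4) F2) : (frm A).IsHomogeneous 3 := by
  apply IsHomogeneous.sum
  intro i _
  apply IsHomogeneous.sum
  intro j _
  exact (isHomogeneous_C _ _).mul ((isHomogeneous_X _ i).mul ((isHomogeneous_X _ j).pow 2))

lemma frm_alt_vanish (p : F2 × F2 × F2 × F2 × F2 × F2) (v : Fin 4 → F2) :
    eval v (frm (alt p)) = 0 := by
  have key : ∀ y : F2, y ^ 2 = y := by decide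
  have h2 : (2 : F2) = 0 := rfl
  simp only [frm, Fin.sum_univ_four]
  simp [alt, key]
  linear_combination (p.1 * v 0 * v 1 + p.2.1 * v 0 * v 2 + p.2.2.1 * v 0 * v 3
    + p.2.2.2.1 * v 1 * v 2 + p.2.2.2.2.1 * v 1 * v 3 + p.2.2.2.2.2 * v 2 * v 3) * h2

lemma smooth_eq : {f : MvPolynomial (Fin 4) F2 |
      IsSmoothCubic f ∧ ∀ v : Fin 4 → F2, eval v f = 0}
    = (fun p => frm (alt p)) '' {p | pf p ≠ 0} := by
  ext f
  simp only [Set.mem_setOf_eq, Set.mem_image]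
  constructor
  · rintro ⟨⟨hf, hs⟩, hv⟩
    obtain ⟨p, rfl⟩ := vanishing_eq f hf hv
    refine ⟨p, ?_, rfl⟩
    intro h0
    obtain ⟨w, hw, hw0⟩ := exists_ker p h0
    have key : ∀ y : F2, y ^ 2 = y := by decide
    have h := hs (fun i => algebraMap F2 Kbar (w i)) ?_ ?_
    · apply hw
      funext i
      simpa using congrFun h i
    · have := hv w
      rw [eval_map, ← Function.comp_def, ← eval₂_comp, this, map_zero]
    · intro i
      rw [eval_map, ← Function.comp_def, ← eval₂_comp, pderiv_frm]
      have := congrFun hw0 i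
      simp only [Matrix.mulVec, dotProduct, Pi.zero_apply] at this
      simp [key, this]
  · rintro ⟨p, hp, rfl⟩
    refine ⟨⟨frm_homogeneous _, ?_⟩, frm_alt_vanish p⟩
    intro v _ hd
    have hm : ((alt p).map (algebraMap F2 Kbar)).mulVec (fun j => v j ^ 2) = 0 := by
      funext i
      have := hd i
      rw [pderiv_frm] at this
      simpa [Matrix.mulVec, dotProduct] using this
    have hz : (fun j => v j ^ 2) = 0 := by
      have h1 := congrArg (fun M => M.map (algebraMap F2 Kbar)) (alt_mul_dual p hp)
      simp only [Matrix.map_mul] at h1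
      have h2 := congrArg (((alt (dual p)).map (algebraMap F2 Kbar)).mulVec) hm
      rw [Matrix.mulVec_mulVec, h1, Matrix.mulVec_zero] at h2
      simpa using h2
    funext j
    simpa using congrFun hz j

/-- there are exactly `28` smooth cubic forms over `𝔽₂` vanishing at every
point of `𝔽₂⁴`; equivalently, the `GL₄(𝔽₂)`-orbit of `c₀` consists of exactly `28` cubic
forms. -/
theorem card_smooth_vanishing_cubics :
    {f : MvPolynomial (Fin 4) F2 |
      IsSmoothCubic f ∧ ∀ v : Fin 4 → F2, eval v f = 0}.ncard = 28 ∧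
    {f : MvPolynomial (Fin 4) F2 |
      ∃ g : GL (Fin 4) F2, act (g : Matrix (Fin 4) (Fin 4) F2) c0 = f}.ncard = 28 := by
  rw [smooth_eq, orbit_eq]
  exact ⟨card_image, card_image⟩
end
end
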